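/- arXiv:cs/0010032 — 6 statements merged into one kernel-verified Lean document; each statement's English description precedes it below -/
import Mathlib

section
/- For every theory T ⊆ L_not and every formula F of L_not: (1) the formula (not F) → ¬(not ¬F) belongs to Cn_not(T); and (2) if F belongs to Cn_not(T), then not ¬F belongs to Cn_not(T). -/
/-!
Both claims hold for every set `S` closed in the sense of `CnClosed T`, hence for the intersection
of all such sets. For (1), `F ∨ ¬F ↔ true` is a tautology, so invariance gives
`not (F ∨ ¬F) ↔ not true`; since `¬ not true` holds and `not` turns the disjunction into the
conjunction `not F ∧ not ¬F`, that conjunction is refuted. For (2), if `F ∈ S` then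
`¬F ↔ false` is in `S`, so `not ¬F ↔ not false` is in `S`, and `not false` is an axiom.
-/

/-- Formulas of the modal language `L_not` over the set `At` of objective atoms.
`not F` is the default negation atom for a formula `F` (arbitrary nesting allowed). -/
inductive Fml (At : Type) : Type
  | atom : At → Fml At
  | tru : Fml At
  | fls : Fml At
  | neg : Fml At → Fml At
  | conj : Fml At → Fml At → Fml At
  | disj : Fml At → Fml At → Fml At
  | impl : Fml At → Fml At → Fml At
  | equiv : Fml At → Fml At → Fml At
  | not : Fml At → Fml At

/-- An interpretation of `L_not`: a truth value for every objective atom and for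
every default atom `not F` (the latter treated as new propositional atoms). -/
structure Interp (At : Type) where
  obj : At → Prop
  dflt : Fml At → Prop

/-- Classical satisfaction of a formula by an interpretation. -/
def Interp.sat {At : Type} (I : Interp At) : Fml At → Prop
  | Fml.atom a => I.obj a
  | Fml.tru => True
  | Fml.fls => False
  | Fml.neg F => ¬ Interp.sat I F
  | Fml.conj F G => Interp.sat I F ∧ Interp.sat I G
  | Fml.disj F G => Interp.sat I F ∨ Interp.sat I G
  | Fml.impl F G => Interp.sat I F → Interp.sat I G
  | Fml.equiv F G => (Interp.sat I F ↔ Interp.sat I G)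
  | Fml.not F => I.dflt F

/-- `I` is a model of the theory `T`. -/
def Interp.satTheory {At : Type} (I : Interp At) (T : Set (Fml At)) : Prop :=
  ∀ F ∈ T, I.sat F

/-- A set `S` contains `T`, the axioms (CA) and (DA), and is closed under
classical propositional consequence and the invariance rule (IR). -/
def CnClosed {At : Type} (T S : Set (Fml At)) : Prop :=
  T ⊆ S ∧
  Fml.not Fml.fls ∈ S ∧
  Fml.neg (Fml.not Fml.tru) ∈ S ∧
  (∀ F G : Fml At,
    Fml.equiv (Fml.not (Fml.disj F G)) (Fml.conj (Fml.not F) (Fml.not G)) ∈ S) ∧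
  (∀ F : Fml At, (∀ I : Interp At, I.satTheory S → I.sat F) → F ∈ S) ∧
  (∀ F G : Fml At, Fml.equiv F G ∈ S → Fml.equiv (Fml.not F) (Fml.not G) ∈ S)

/-- `Cn_not(T)`: the smallest set of formulas containing `T`, the axioms (CA), (DA),
closed under propositional consequence and the invariance rule (IR). -/
def CnNot {At : Type} (T : Set (Fml At)) : Set (Fml At) :=
  ⋂₀ {S | CnClosed T S}

/-- `M` is smaller than `N`: they agree on all default atoms and the objective atoms
true in `M` form a proper subset of those true in `N`. -/
def Smaller {At : Type} (M N : Interp At) : Prop :=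
  M.dflt = N.dflt ∧ {a | M.obj a} ⊂ {a | N.obj a}

/-- `M` is a minimal model of `T`. -/
def IsMinModel {At : Type} (T : Set (Fml At)) (M : Interp At) : Prop :=
  M.satTheory T ∧ ∀ N : Interp At, N.satTheory T → ¬ Smaller N M

/-- `T ⊨_min F`: `F` is true in all minimal models of `T`. -/
def MinEntails {At : Type} (T : Set (Fml At)) (F : Fml At) : Prop :=
  ∀ M : Interp At, IsMinModel T M → M.sat F

/-- `Td` is a static expansion of `T`. -/
def IsStaticExpansion {At : Type} (T Td : Set (Fml At)) : Prop :=
  Td = CnNot (T ∪ {G | ∃ F : Fml At, MinEntails Td (Fml.neg F) ∧ G = Fml.not F})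

/-- `Tbar` is the least static expansion of `T`. -/
def IsLeastStaticExpansion {At : Type} (T Tbar : Set (Fml At)) : Prop :=
  IsStaticExpansion T Tbar ∧ ∀ Td : Set (Fml At), IsStaticExpansion T Td → Tbar ⊆ Td

/-- For every theory `T ⊆ L_not` and every formula `F` of `L_not`:
(1) `(not F) → ¬(not ¬F)` belongs to `Cn_not(T)`; and
(2) if `F ∈ Cn_not(T)` then `not ¬F ∈ Cn_not(T)`. -/
theorem cnNot_props {At : Type} (T : Set (Fml At)) (F : Fml At) :
    Fml.impl (Fml.not F) (Fml.neg (Fml.not (Fml.neg F))) ∈ CnNot T ∧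
    (F ∈ CnNot T → Fml.not (Fml.neg F) ∈ CnNot T) := by
  constructor
  · rintro S ⟨-, -, hDA, hOr, hCons, hInv⟩
    have hTaut : Fml.equiv (Fml.disj F (Fml.neg F)) Fml.tru ∈ S := by
      apply hCons
      intro I _
      simp only [Interp.sat]
      tauto
    have hNot := hInv _ _ hTaut
    apply hCons
    intro I hI
    have h1 := hI _ hNot
    have h2 := hI _ hDA
    have h3 := hI _ (hOr F (Fml.neg F))
    simp only [Interp.sat] at h1 h2 h3 ⊢
    tauto
  · intro hF S hS
    have hFS : F ∈ S := hF S hS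
    obtain ⟨-, hCA, -, -, hCons, hInv⟩ := hS
    have hEquiv : Fml.equiv (Fml.neg F) Fml.fls ∈ S := by
      apply hCons
      intro I hI
      have h := hI _ hFS
      simp only [Interp.sat]
      tauto
    have hNot := hInv _ _ hEquiv
    apply hCons
    intro I hI
    have h1 := hI _ hNot
    have h2 := hI _ hCA
    simp only [Interp.sat] at h1 h2 ⊢
    tauto
end

section
/- For all formulas F1, …, Fm and G of L_not, the formula (not F1 ∧ … ∧ not Fm) → not G belongs to Cn_not({not(¬F1 ∧ … ∧ ¬Fm ∧ G)}). -/
/-- Conjunction of a list of formulas (the empty conjunction is `true`). -/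
def conjList {At : Type} : List (Fml At) → Fml At
  | [] => Fml.tru
  | [F] => F
  | F :: G :: Gs => Fml.conj F (conjList (G :: Gs))

/-- Disjunction of a list of formulas. The empty disjunction is `false`, and `false` is also kept
as the last disjunct of a nonempty one. -/
def disjList {At : Type} (Fs : List (Fml At)) : Fml At :=
  Fs.foldr Fml.disj Fml.fls

theorem sat_conjList {At : Type} (I : Interp At) (Fs : List (Fml At)) :
    I.sat (conjList Fs) ↔ ∀ F ∈ Fs, I.sat F := by
  induction Fs with
  | nil => simp [conjList, Interp.sat]
  | cons F Fs ih =>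
    cases Fs with
    | nil => simp [conjList]
    | cons F' Fs => simp only [conjList, Interp.sat, ih, List.forall_mem_cons]

theorem sat_disjList {At : Type} (I : Interp At) (Fs : List (Fml At)) :
    I.sat (disjList Fs) ↔ ∃ F ∈ Fs, I.sat F := by
  induction Fs with
  | nil => simp [disjList, Interp.sat]
  | cons F Fs ih =>
    simp only [disjList, List.foldr_cons, Interp.sat, List.exists_mem_cons_iff] at ih ⊢
    rw [ih]

/-- By the axiom for `not (F ∨ G)`, starting from `not false` for the empty disjunction. -/
theorem dflt_disjList {At : Type} {T S : Set (Fml At)} (hS : CnClosed T S) {I : Interp At}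
    (hI : I.satTheory S) (Fs : List (Fml At)) (h : ∀ F ∈ Fs, I.dflt F) :
    I.dflt (disjList Fs) := by
  obtain ⟨-, hfls, -, hdisj, -, -⟩ := hS
  induction Fs with
  | nil => exact hI _ hfls
  | cons F Fs ih =>
    rw [List.forall_mem_cons] at h
    exact (hI _ (hdisj F (disjList Fs))).2 ⟨h.1, ih h.2⟩

/-- For all formulas `F1, …, Fm` and `G` of `L_not`, the formula
`(not F1 ∧ … ∧ not Fm) → not G` belongs to
`Cn_not({not(¬F1 ∧ … ∧ ¬Fm ∧ G)})`. -/
theorem cnNot_impl_of_not {At : Type} (Fs : List (Fml At)) (G : Fml At) :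
    Fml.impl (conjList (Fs.map Fml.not)) (Fml.not G) ∈
      CnNot {Fml.not (conjList (Fs.map Fml.neg ++ [G]))} := by
  intro S hS
  obtain ⟨hT, -, -, hdisj, hcons, hinv⟩ := id hS
  refine hcons _ fun I hI hFs => ?_
  have hD : I.dflt (disjList Fs) := by
    refine dflt_disjList hS hI Fs fun F hF => ?_
    exact (sat_conjList I _).1 hFs (Fml.not F) (List.mem_map_of_mem hF)
  have hH : I.dflt (conjList (Fs.map Fml.neg ++ [G])) := hI _ (hT rfl)
  have hequiv : Fml.equiv (Fml.disj (disjList Fs) (conjList (Fs.map Fml.neg ++ [G])))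
      (Fml.disj (disjList Fs) G) ∈ S := by
    refine hcons _ fun J _ => ?_
    have hJ : J.sat (conjList (Fs.map Fml.neg ++ [G])) ↔ ¬ J.sat (disjList Fs) ∧ J.sat G := by
      simp [sat_conjList, sat_disjList, or_imp, forall_and, Interp.sat]
    simp only [Interp.sat, hJ]
    tauto
  have hDG := (hI _ (hinv _ _ hequiv)).1 ((hI _ (hdisj _ _)).2 ⟨hD, hH⟩)
  exact ((hI _ (hdisj _ _)).1 hDG).2
end

section
/- Let T ⊆ L_not be any theory and let T_not ⊆ L_not be a set of formulas each of which is a propositional combination of default atoms only (containing no objective atoms). Then the minimal models of T ∪ T_not are precisely those minimal models of T which satisfy T_not. -/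
/-- A formula is a propositional combination of default atoms only
(it contains no objective atoms). -/
def DefaultOnly {At : Type} : Fml At → Prop
  | Fml.atom _ => False
  | Fml.tru => True
  | Fml.fls => True
  | Fml.neg F => DefaultOnly F
  | Fml.conj F G => DefaultOnly F ∧ DefaultOnly G
  | Fml.disj F G => DefaultOnly F ∧ DefaultOnly G
  | Fml.impl F G => DefaultOnly F ∧ DefaultOnly G
  | Fml.equiv F G => DefaultOnly F ∧ DefaultOnly G
  | Fml.not _ => True

theorem sat_iff_of_defaultOnly {At : Type} {I J : Interp At} (hIJ : I.dflt = J.dflt)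
    (F : Fml At) (hF : DefaultOnly F) : I.sat F ↔ J.sat F := by
  induction F with
  | atom a => exact hF.elim
  | tru => exact Iff.rfl
  | fls => exact Iff.rfl
  | neg F ih => exact not_congr (ih hF)
  | conj F G ihF ihG => exact and_congr (ihF hF.1) (ihG hF.2)
  | disj F G ihF ihG => exact or_congr (ihF hF.1) (ihG hF.2)
  | impl F G ihF ihG => exact imp_congr (ihF hF.1) (ihG hF.2)
  | equiv F G ihF ihG => exact iff_congr (ihF hF.1) (ihG hF.2)
  | not F _ => exact iff_of_eq (congrFun hIJ F)

/-- Let `T` be any theory and `Tnot` a set of formulas each of which is a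
propositional combination of default atoms only.  Then the minimal models of
`T ∪ Tnot` are precisely those minimal models of `T` which satisfy `Tnot`. -/
theorem minModel_union_defaultOnly {At : Type} (T Tnot : Set (Fml At))
    (h : ∀ F ∈ Tnot, DefaultOnly F) (M : Interp At) :
    IsMinModel (T ∪ Tnot) M ↔ IsMinModel T M ∧ M.satTheory Tnot := by
  constructor
  · rintro ⟨hM, hmin⟩
    have hMnot : M.satTheory Tnot := fun F hF => hM F (Or.inr hF)
    refine ⟨⟨fun F hF => hM F (Or.inl hF), fun N hN hlt => hmin N ?_ hlt⟩, hMnot⟩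
    rintro F (hF | hF)
    · exact hN F hF
    · exact (sat_iff_of_defaultOnly hlt.1 F (h F hF)).2 (hMnot F hF)
  · rintro ⟨⟨hM, hmin⟩, hMnot⟩
    exact ⟨fun F hF => hF.elim (hM F) (hMnot F),
      fun N hN => hmin N fun F hF => hN F (Or.inl hF)⟩
end

section
/- Let T1 ⊆ L_not be a theory with T1 ⊨_min F, and let T2 ⊆ L_not be a set of default atoms, i.e. formulas of the form not G with G an arbitrary formula of L_not. Then Cn_not(T1 ∪ T2) ⊨_min F. -/
theorem cnClosed_cnNot {At : Type} (T : Set (Fml At)) : CnClosed T (CnNot T) := by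
  refine ⟨fun F hF S hS => hS.1 hF, fun S hS => hS.2.1, fun S hS => hS.2.2.1,
    fun F G S hS => hS.2.2.2.1 F G, fun F hF S hS => ?_, fun F G h S hS => ?_⟩
  · exact hS.2.2.2.2.1 F fun I hI => hF I fun H hH => hI H (hH S hS)
  · exact hS.2.2.2.2.2 F G (h S hS)

/-- A model of `T1` that agrees on the default atoms with some model of `Cn_not(T1 ∪ T2)` is itself
a model of `Cn_not(T1 ∪ T2)`, when `T2` consists of default atoms. -/
theorem satTheory_cnNot_of_dflt_eq {At : Type} {T1 T2 : Set (Fml At)}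
    (h2 : ∀ H ∈ T2, ∃ G : Fml At, H = Fml.not G) {M N : Interp At}
    (hM : M.satTheory (CnNot (T1 ∪ T2))) (hN : N.satTheory T1) (hd : N.dflt = M.dflt) :
    N.satTheory (CnNot (T1 ∪ T2)) := by
  obtain ⟨hT, hfls, htru, hdisj, hcons, hinv⟩ := cnClosed_cnNot (T1 ∪ T2)
  -- Intersecting with `Cn_not` lets the invariance rule be checked in `M`: its conclusion holds
  -- in `M` and mentions default atoms only, whereas its premise in `N` alone would give nothing.
  have hS : CnClosed (T1 ∪ T2) {F | F ∈ CnNot (T1 ∪ T2) ∧ N.sat F} := by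
    refine ⟨fun H hH => ⟨hT hH, ?_⟩, ⟨hfls, ?_⟩, ⟨htru, ?_⟩, fun F G => ⟨hdisj F G, ?_⟩,
      fun F hF => ⟨hcons F fun I hI => hF I fun H hH => hI H hH.1, hF N fun H hH => hH.2⟩,
      fun F G h => ⟨hinv F G h.1, ?_⟩⟩
    · rcases hH with hH | hH
      · exact hN H hH
      · obtain ⟨G, rfl⟩ := h2 H hH
        simpa only [Interp.sat, hd] using hM _ (hT (Or.inr hH))
    · simpa only [Interp.sat, hd] using hM _ hfls
    · simpa only [Interp.sat, hd] using hM _ htru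
    · simpa only [Interp.sat, hd] using hM _ (hdisj F G)
    · simpa only [Interp.sat, hd] using hM _ (hinv F G h.1)
  exact fun F hF => (hF _ hS).2

/-- Let `T1` be a theory with `T1 ⊨_min F`, and let `T2` be a set of default atoms,
i.e. formulas of the form `not G`.  Then `Cn_not(T1 ∪ T2) ⊨_min F`. -/
theorem minEntails_cnNot_union {At : Type} (T1 T2 : Set (Fml At)) (F : Fml At)
    (h1 : MinEntails T1 F)
    (h2 : ∀ H ∈ T2, ∃ G : Fml At, H = Fml.not G) :
    MinEntails (CnNot (T1 ∪ T2)) F := by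
  rintro M ⟨hM, hmin⟩
  refine h1 M ⟨fun H hH => hM H ((cnClosed_cnNot _).1 (Or.inl hH)), fun N hN hlt => ?_⟩
  exact hmin N (satTheory_cnNot_of_dflt_eq h2 hM hN hlt.1) hlt
end

section
/- Let T1, T2 ⊆ L_not be theories with Cn_not(T1) = Cn_not(T2). Then T1 and T2 have exactly the same static expansions. -/
theorem subset_cnNot {At : Type} (T : Set (Fml At)) : T ⊆ CnNot T :=
  Set.subset_sInter fun _ hS => hS.1

theorem CnClosed.of_cnNot_eq {At : Type} {T1 T2 S : Set (Fml At)}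
    (h : CnNot T1 = CnNot T2) (hS : CnClosed T1 S) : CnClosed T2 S :=
  ⟨((subset_cnNot T2).trans h.ge).trans (Set.sInter_subset_of_mem hS), hS.2⟩

theorem cnClosed_union_iff {At : Type} {T U S : Set (Fml At)} :
    CnClosed (T ∪ U) S ↔ CnClosed T S ∧ U ⊆ S := by
  simp only [CnClosed, Set.union_subset_iff]
  tauto

theorem cnNot_union_congr {At : Type} {T1 T2 : Set (Fml At)}
    (h : CnNot T1 = CnNot T2) (U : Set (Fml At)) : CnNot (T1 ∪ U) = CnNot (T2 ∪ U) := by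
  have hiff (S : Set (Fml At)) : CnClosed (T1 ∪ U) S ↔ CnClosed (T2 ∪ U) S := by
    rw [cnClosed_union_iff, cnClosed_union_iff]
    exact and_congr_left fun _ => ⟨.of_cnNot_eq h, .of_cnNot_eq h.symm⟩
  simp only [CnNot, hiff]

/-- Theories with the same `Cn_not`-closure have exactly the same static expansions. -/
theorem staticExpansion_cnNot_congr {At : Type} (T1 T2 : Set (Fml At))
    (h : CnNot T1 = CnNot T2) (Td : Set (Fml At)) :
    IsStaticExpansion T1 Td ↔ IsStaticExpansion T2 Td := by
  unfold IsStaticExpansion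
  rw [cnNot_union_congr h]
end

section
/- Let P be a finite super logic program, K its standard Kripke model, and I = I_obj ∪ I_def a world of K. Then for all p1,…,pn ∈ At: K(I) ⊨ not(p1∧…∧pn) if and only if I_def ⊨ not(p1∧…∧pn). -/
/-- A Kripke structure with worlds `W`, visibility relation `R` and
valuation `V` of the objective atoms at each world. -/
structure Kripke (At W : Type) where
  R : W → W → Prop
  V : W → At → Prop

/-- Truth of a formula of `L_not` at a world of a Kripke structure:
classical for the propositional connectives, and
`not F` is true at `w` iff `F` is false at every world seen from `w`. -/
def Kripke.sat {At W : Type} (K : Kripke At W) : W → Fml At → Prop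
  | w, Fml.atom a => K.V w a
  | _, Fml.tru => True
  | _, Fml.fls => False
  | w, Fml.neg F => ¬ Kripke.sat K w F
  | w, Fml.conj F G => Kripke.sat K w F ∧ Kripke.sat K w G
  | w, Fml.disj F G => Kripke.sat K w F ∨ Kripke.sat K w G
  | w, Fml.impl F G => Kripke.sat K w F → Kripke.sat K w G
  | w, Fml.equiv F G => (Kripke.sat K w F ↔ Kripke.sat K w G)
  | w, Fml.not F => ∀ w' : W, K.R w w' → ¬ Kripke.sat K w' F

/-- The interpretation `K(w)` of `L_not` induced by the world `w`:
an objective or default atom is true in it iff it is true at `w`. -/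
def Kripke.interp {At W : Type} (K : Kripke At W) (w : W) : Interp At where
  obj a := K.sat w (Fml.atom a)
  dflt F := K.sat w (Fml.not F)

/-- A clause of a super logic program:
`A1 ∨ … ∨ Ak ← B1 ∧ … ∧ Bm ∧ not C1 ∧ … ∧ not Cn`, where the `Ai` (head) and
`Bi` (posBody) are objective atoms and the `Ci` (negBody) are finite
conjunctions of objective atoms. -/
structure Clause (At : Type) where
  head : List At
  posBody : List At
  negBody : List (List At)

/-- Valuations of the objective atoms (`Obj`). -/
abbrev ObjVal (At : Type) := At → Prop

/-- Valuations of the default atoms `not(p1 ∧ … ∧ pn)`, indexed by the list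
`[p1, …, pn]` of atoms of the conjunction. -/
abbrev DefVal (At : Type) := List At → Prop

/-- `Def`: the valuations of the default atoms making `not(true)`
(the empty conjunction case) false. -/
def DefSet (At : Type) : Set (DefVal At) := {d | ¬ d []}

/-- Satisfaction of a clause by a reduced interpretation `I_obj ∪ I_def`. -/
def satClause {At : Type} (Io : ObjVal At) (Id : DefVal At) (c : Clause At) : Prop :=
  ((∀ b ∈ c.posBody, Io b) ∧ (∀ C ∈ c.negBody, Id C)) → ∃ a ∈ c.head, Io a

/-- `I_obj ∪ I_def` is a model of the super program `P`. -/
def satProg {At : Type} (Io : ObjVal At) (Id : DefVal At) (P : Set (Clause At)) : Prop :=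
  ∀ c ∈ P, satClause Io Id c

/-- `I_obj ∪ I_def` is a minimal model of `P`: it is a model and no model with the
same default part has a strictly smaller set of true objective atoms. -/
def IsMinModelProg {At : Type} (P : Set (Clause At)) (Io : ObjVal At) (Id : DefVal At) : Prop :=
  satProg Io Id P ∧
  ∀ Io' : ObjVal At, satProg Io' Id P → ¬ ({a | Io' a} ⊂ {a | Io a})

/-- `I_def` is given by the set `O` of objective valuations:
`I_def ⊨ not(p1∧…∧pn)` iff every valuation in `O` satisfies `¬(p1∧…∧pn)`. -/
def givenBy {At : Type} (Id : DefVal At) (O : Set (ObjVal At)) : Prop :=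
  ∀ E : List At, Id E ↔ ∀ Io ∈ O, ∃ p ∈ E, ¬ Io p

/-- The operator `Φ_P`: objective parts of minimal models of `P` whose default part
belongs to `D`. -/
def PhiOp {At : Type} (P : Set (Clause At)) (D : Set (DefVal At)) : Set (ObjVal At) :=
  {Io | ∃ Id ∈ D, IsMinModelProg P Io Id}

/-- The operator `Ψ_P`: default valuations given by some nonempty subset of `O`
and extendable to a model of `P`. -/
def PsiOp {At : Type} (P : Set (Clause At)) (O : Set (ObjVal At)) : Set (DefVal At) :=
  {Id | Id ∈ DefSet At ∧
        (∃ O' ⊆ O, O'.Nonempty ∧ givenBy Id O') ∧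
        (∃ Io : ObjVal At, satProg Io Id P)}

/-- The operator `Λ_P := Ψ_P ∘ Φ_P`. -/
def LamOp {At : Type} (P : Set (Clause At)) : Set (DefVal At) → Set (DefVal At) :=
  PsiOp P ∘ PhiOp P

/-- The conjunction `p1 ∧ … ∧ pn` of a list of objective atoms
(the empty conjunction is `true`, a one-element list is just the atom). -/
def conjAtoms {At : Type} : List At → Fml At
  | [] => Fml.tru
  | [p] => Fml.atom p
  | p :: q :: ps => Fml.conj (Fml.atom p) (conjAtoms (q :: ps))

/-- Disjunction `p1 ∨ … ∨ pk` of a list of objective atoms (empty = `false`). -/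
def disjAtoms {At : Type} : List At → Fml At
  | [] => Fml.fls
  | [p] => Fml.atom p
  | p :: q :: ps => Fml.disj (Fml.atom p) (disjAtoms (q :: ps))

/-- The default atom `not(p1 ∧ … ∧ pn)`, with `not(true)` (the case `n = 0`)
identified with `false`. -/
def notConj {At : Type} : List At → Fml At
  | [] => Fml.fls
  | p :: ps => Fml.not (conjAtoms (p :: ps))

/-- The formula of `L_not` corresponding to a program clause. -/
def Clause.toFml {At : Type} (c : Clause At) : Fml At :=
  Fml.impl (conjList (c.posBody.map Fml.atom ++ c.negBody.map notConj))
    (disjAtoms c.head)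

/-- The default part of the reduct of a full interpretation `I`:
its restriction to the default atoms `not(p1 ∧ … ∧ pn)`. -/
def reductDef {At : Type} (I : Interp At) : DefVal At :=
  fun E => I.dflt (conjAtoms E)

/-- Worlds of the standard Kripke model of `P` (relative to a set `NP` of default
valuations): reduced interpretations `I = I_obj ∪ I_def` with `I ⊨ P` and `I_def ∈ NP`. -/
def StdWorld {At : Type} (P : Set (Clause At)) (NP : Set (DefVal At)) : Type :=
  {I : ObjVal At × DefVal At // satProg I.1 I.2 P ∧ I.2 ∈ NP}

/-- The standard Kripke model of `P` (relative to `NP`): `R(I, I')` iff `I'` is a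
minimal model of `P` and every default atom true in `I` has its conjunction falsified
by `I'`; the valuation of a world is its objective part. -/
def stdKripke {At : Type} (P : Set (Clause At)) (NP : Set (DefVal At)) :
    Kripke At (StdWorld P NP) where
  R I I' := IsMinModelProg P I'.1.1 I'.1.2 ∧
    ∀ E : List At, I.1.2 E → ∃ p ∈ E, ¬ I'.1.1 p
  V I a := I.1.1 a

/-- A conjunction of atoms holds at a world iff each of its atoms does. -/
lemma Kripke.sat_conjAtoms {At W : Type} (K : Kripke At W) (w : W) (E : List At) :
    K.sat w (conjAtoms E) ↔ ∀ p ∈ E, K.V w p := by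
  fun_induction conjAtoms E with
  | case1 => simp [Kripke.sat]
  | case2 p => simp [Kripke.sat]
  | case3 p q ps ih => simp only [Kripke.sat, ih, List.forall_mem_cons]

/-- Let `P` be a finite super logic program, `K` its standard Kripke model (with
`N_P` the fixed point of the iteration of `Λ_P` from `Def`), and `I = I_obj ∪ I_def`
a world of `K`.  Then for all `p1, …, pn ∈ At`:
`K(I) ⊨ not(p1 ∧ … ∧ pn)` iff `I_def ⊨ not(p1 ∧ … ∧ pn)`. -/
theorem stdKripke_agrees_on_defaults {At : Type} [Finite At]
    (P : Set (Clause At)) (hPfin : P.Finite)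
    (k : ℕ) (hfix : (LamOp P)^[k + 1] (DefSet At) = (LamOp P)^[k] (DefSet At))
    (I : StdWorld P ((LamOp P)^[k] (DefSet At))) (E : List At) :
    ((stdKripke P ((LamOp P)^[k] (DefSet At))).interp I).sat (Fml.not (conjAtoms E)) ↔
      I.1.2 E := by
  change (∀ w', _ → ¬ _) ↔ _
  simp only [Kripke.sat_conjAtoms]
  constructor
  · intro h
    have hI := hfix.ge I.2.2
    rw [Function.iterate_succ_apply'] at hI
    obtain ⟨-, ⟨O', hO', -, hgiven⟩, -⟩ := hI
    refine (hgiven E).2 fun Io hIo => ?_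
    obtain ⟨Id, hId, hmin⟩ := hO' hIo
    -- `Io` comes from a minimal model with default part in the fixed point, so that model is
    -- itself a world; it is visible from `I` because `Io` belongs to the set giving `I_def`.
    have hnot := h ⟨(Io, Id), hmin.1, hId⟩ ⟨hmin, fun F hF => (hgiven F).1 hF Io hIo⟩
    simpa [stdKripke] using hnot
  · rintro hE w' ⟨-, hR⟩ hall
    obtain ⟨p, hp, hnp⟩ := hR E hE
    exact hnp (hall p hp)
end
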